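/- With λ_1 := lim_{p→∞} λ_1(p), where λ_1(p) is the largest eigenvalue of Z_p := (A^{p/2} B^p A^{p/2})^{1/p}, one has λ_1 = max{ a_i b_j : 1 ≤ i, j ≤ d, (V*W)_{ij} ≠ 0 }, where (V*W)_{ij} denotes the (i,j) entry of the unitary matrix V*W. -/

import Mathlib

open Matrix Filter Topology Finset
open scoped ComplexOrder

/-- Functional-calculus power of a (Hermitian, in practice positive semidefinite)
matrix, with the convention `0 ^ r = 0` for `r > 0`. -/
noncomputable def psdPow {d : ℕ} (A : Matrix (Fin d) (Fin d) ℂ) (r : ℝ) :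
    Matrix (Fin d) (Fin d) ℂ :=
  if hA : A.IsHermitian then
    (hA.eigenvectorUnitary : Matrix (Fin d) (Fin d) ℂ) *
      Matrix.diagonal (fun i => ((hA.eigenvalues i ^ r : ℝ) : ℂ)) *
      star (hA.eigenvectorUnitary : Matrix (Fin d) (Fin d) ℂ)
  else 0

/-- The eigenvalues of a Hermitian matrix, sorted in decreasing order
(with multiplicities). -/
noncomputable def eigsDesc {d : ℕ} (A : Matrix (Fin d) (Fin d) ℂ) : Fin d → ℝ :=
  if hA : A.IsHermitian then
    fun i => hA.eigenvalues (Tuple.sort hA.eigenvalues i.rev)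
  else 0

/-- `Zmat A B p = (A^{p/2} B^p A^{p/2})^{1/p}`. -/
noncomputable def Zmat {d : ℕ} (A B : Matrix (Fin d) (Fin d) ℂ) (p : ℝ) :
    Matrix (Fin d) (Fin d) ℂ :=
  psdPow (psdPow A (p / 2) * psdPow B p * psdPow A (p / 2)) (1 / p)

theorem diag_intertwine {d : ℕ} {U V : Matrix (Fin d) (Fin d) ℂ} {e f : Fin d → ℝ}
    (hU : U ∈ Matrix.unitaryGroup (Fin d) ℂ) (hV : V ∈ Matrix.unitaryGroup (Fin d) ℂ)
    (h : U * Matrix.diagonal (fun i => (e i : ℂ)) * Uᴴ =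
      V * Matrix.diagonal (fun i => (f i : ℂ)) * Vᴴ) (i j : Fin d)
    (hij : (Vᴴ * U) i j ≠ 0) : e j = f i := by
  have hU' : Uᴴ * U = 1 := Matrix.mem_unitaryGroup_iff'.1 hU
  have hV' : Vᴴ * V = 1 := Matrix.mem_unitaryGroup_iff'.1 hV
  have h1 : (Vᴴ * U) * Matrix.diagonal (fun i => (e i : ℂ)) =
      Matrix.diagonal (fun i => (f i : ℂ)) * (Vᴴ * U) := by
    calc (Vᴴ * U) * Matrix.diagonal (fun i => (e i : ℂ))
        = Vᴴ * (U * Matrix.diagonal (fun i => (e i : ℂ)) * Uᴴ) * U := by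
          simp only [Matrix.mul_assoc, hU', Matrix.mul_one]
      _ = (Vᴴ * V) * Matrix.diagonal (fun i => (f i : ℂ)) * (Vᴴ * U) := by
          rw [h]; simp only [Matrix.mul_assoc]
      _ = _ := by rw [hV', Matrix.one_mul]
  have h2 := congrFun (congrFun h1 i) j
  rw [Matrix.mul_diagonal, Matrix.diagonal_mul, mul_comm] at h2
  exact_mod_cast mul_right_cancel₀ hij h2

theorem diag_fun {d : ℕ} {U V : Matrix (Fin d) (Fin d) ℂ} {e f : Fin d → ℝ}
    (hU : U ∈ Matrix.unitaryGroup (Fin d) ℂ) (hV : V ∈ Matrix.unitaryGroup (Fin d) ℂ)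
    (h : U * Matrix.diagonal (fun i => (e i : ℂ)) * Uᴴ =
      V * Matrix.diagonal (fun i => (f i : ℂ)) * Vᴴ) (g : ℝ → ℝ) :
    U * Matrix.diagonal (fun i => (g (e i) : ℂ)) * Uᴴ =
      V * Matrix.diagonal (fun i => (g (f i) : ℂ)) * Vᴴ := by
  have hU' : U * Uᴴ = 1 := Matrix.mem_unitaryGroup_iff.1 hU
  have hV' : V * Vᴴ = 1 := Matrix.mem_unitaryGroup_iff.1 hV
  have h1 : (Vᴴ * U) * Matrix.diagonal (fun i => (g (e i) : ℂ)) =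
      Matrix.diagonal (fun i => (g (f i) : ℂ)) * (Vᴴ * U) := by
    ext i j
    rw [Matrix.mul_diagonal, Matrix.diagonal_mul, mul_comm]
    by_cases hij : (Vᴴ * U) i j = 0
    · simp [hij]
    · rw [diag_intertwine hU hV h i j hij]
  calc U * Matrix.diagonal (fun i => (g (e i) : ℂ)) * Uᴴ
      = (V * Vᴴ) * U * Matrix.diagonal (fun i => (g (e i) : ℂ)) * Uᴴ := by
        rw [hV', Matrix.one_mul]
    _ = V * ((Vᴴ * U) * Matrix.diagonal (fun i => (g (e i) : ℂ))) * Uᴴ := by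
        simp only [Matrix.mul_assoc]
    _ = V * Matrix.diagonal (fun i => (g (f i) : ℂ)) * Vᴴ := by
        rw [h1]; simp only [Matrix.mul_assoc, hU', Matrix.mul_one]

theorem spec_form {d : ℕ} {A : Matrix (Fin d) (Fin d) ℂ} (hA : A.IsHermitian) :
    A = (hA.eigenvectorUnitary : Matrix (Fin d) (Fin d) ℂ) *
      Matrix.diagonal (fun i => (hA.eigenvalues i : ℂ)) *
      (hA.eigenvectorUnitary : Matrix (Fin d) (Fin d) ℂ)ᴴ := by
  have := hA.spectral_theorem
  rw [Unitary.conjStarAlgAut_apply] at this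
  exact this

theorem diag_herm {d : ℕ} (V : Matrix (Fin d) (Fin d) ℂ) (a : Fin d → ℝ) :
    (V * Matrix.diagonal (fun i => (a i : ℂ)) * Vᴴ).IsHermitian := by
  apply Matrix.isHermitian_mul_mul_conjTranspose
  apply Matrix.isHermitian_diagonal_of_self_adjoint
  ext i
  simp

theorem psdPow_diag {d : ℕ} {A V : Matrix (Fin d) (Fin d) ℂ} {a : Fin d → ℝ}
    (hV : V ∈ Matrix.unitaryGroup (Fin d) ℂ)
    (hAd : A = V * Matrix.diagonal (fun i => (a i : ℂ)) * Vᴴ) (r : ℝ) :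
    psdPow A r = V * Matrix.diagonal (fun i => ((a i ^ r : ℝ) : ℂ)) * Vᴴ := by
  have hA : A.IsHermitian := hAd ▸ diag_herm V a
  rw [psdPow, dif_pos hA]
  exact diag_fun hA.eigenvectorUnitary.2 hV ((spec_form hA).symm.trans hAd) (fun x => x ^ r)

theorem unitary_row {d : ℕ} {X : Matrix (Fin d) (Fin d) ℂ}
    (h : X * Xᴴ = 1) (i : Fin d) : ∃ j, X i j ≠ 0 := by
  by_contra! hc
  have := congrFun (congrFun h i) i
  rw [Matrix.mul_apply] at this
  simp [hc] at this

theorem eigsDesc_top {d : ℕ} (hd : 0 < d) {Z U : Matrix (Fin d) (Fin d) ℂ} {e : Fin d → ℝ}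
    (hU : U ∈ Matrix.unitaryGroup (Fin d) ℂ)
    (hZ : Z = U * Matrix.diagonal (fun i => (e i : ℂ)) * Uᴴ) :
    (∃ i, eigsDesc Z ⟨0, hd⟩ = e i) ∧ ∀ i, e i ≤ eigsDesc Z ⟨0, hd⟩ := by
  have hH : Z.IsHermitian := hZ ▸ diag_herm U e
  have key := diag_intertwine hH.eigenvectorUnitary.2 hU ((spec_form hH).symm.trans hZ)
  set Q : Matrix (Fin d) (Fin d) ℂ := (hH.eigenvectorUnitary : Matrix (Fin d) (Fin d) ℂ) with hQ
  have hQm : Q ∈ Matrix.unitaryGroup (Fin d) ℂ := hH.eigenvectorUnitary.2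
  have hQ1 : Q * Qᴴ = 1 := Matrix.mem_unitaryGroup_iff.1 hQm
  have hQ2 : Qᴴ * Q = 1 := Matrix.mem_unitaryGroup_iff'.1 hQm
  have hU1 : U * Uᴴ = 1 := Matrix.mem_unitaryGroup_iff.1 hU
  have hU2 : Uᴴ * U = 1 := Matrix.mem_unitaryGroup_iff'.1 hU
  have hX : (Uᴴ * Q) * (Uᴴ * Q)ᴴ = 1 := by
    rw [Matrix.conjTranspose_mul, Matrix.conjTranspose_conjTranspose, Matrix.mul_assoc,
      ← Matrix.mul_assoc Q, hQ1, Matrix.one_mul, hU2]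
  have hY : (Qᴴ * U) * (Qᴴ * U)ᴴ = 1 := by
    rw [Matrix.conjTranspose_mul, Matrix.conjTranspose_conjTranspose, Matrix.mul_assoc,
      ← Matrix.mul_assoc U, hU1, Matrix.one_mul, hQ2]
  rw [eigsDesc, dif_pos hH]
  constructor
  · obtain ⟨i, hi⟩ := unitary_row hY (Tuple.sort hH.eigenvalues (Fin.rev ⟨0, hd⟩))
    refine ⟨i, key _ _ fun h0 => hi ?_⟩
    have : Qᴴ * U = (Uᴴ * Q)ᴴ := by simp [Matrix.conjTranspose_mul]
    rw [this, Matrix.conjTranspose_apply, h0, star_zero]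
  · intro i
    obtain ⟨j, hj⟩ := unitary_row hX i
    rw [← key i j hj]
    have hm := Tuple.monotone_sort hH.eigenvalues
    have hle : (Tuple.sort hH.eigenvalues).symm j ≤ Fin.rev ⟨0, hd⟩ := by
      rw [Fin.le_def, Fin.val_rev]
      have := ((Tuple.sort hH.eigenvalues).symm j).2
      simp only
      omega
    simpa using hm hle

theorem trace_form {d : ℕ} {V W : Matrix (Fin d) (Fin d) ℂ} (e f : Fin d → ℝ) :
    (V * Matrix.diagonal (fun i => (e i : ℂ)) * Vᴴ *
      (W * Matrix.diagonal (fun i => (f i : ℂ)) * Wᴴ)).trace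
      = ((∑ i, ∑ j, e i * f j * ‖(Vᴴ * W) i j‖ ^ 2 : ℝ) : ℂ) := by
  have : (V * Matrix.diagonal (fun i => (e i : ℂ)) * Vᴴ *
      (W * Matrix.diagonal (fun i => (f i : ℂ)) * Wᴴ)).trace
      = ((Matrix.diagonal (fun i => (e i : ℂ)) * (Vᴴ * W)) *
        (Matrix.diagonal (fun i => (f i : ℂ)) * (Vᴴ * W)ᴴ)).trace := by
    rw [Matrix.conjTranspose_mul, Matrix.conjTranspose_conjTranspose]
    rw [Matrix.mul_assoc, Matrix.mul_assoc, Matrix.trace_mul_comm]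
    simp only [Matrix.mul_assoc]
  rw [this, Matrix.trace]
  push_cast
  refine Finset.sum_congr rfl fun i _ => ?_
  rw [Matrix.diag_apply, Matrix.mul_apply]
  refine Finset.sum_congr rfl fun j _ => ?_
  rw [Matrix.diagonal_mul, Matrix.diagonal_mul, Matrix.conjTranspose_apply, ← Complex.mul_conj']
  simp only [RCLike.star_def]
  ring

/-- The top eigenvalue to the power `p` is sandwiched by the trace. -/
theorem top_bounds {d : ℕ} (hd : 0 < d) {A B V W : Matrix (Fin d) (Fin d) ℂ} {a b : Fin d → ℝ}
    (hV : V ∈ Matrix.unitaryGroup (Fin d) ℂ)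
    (hW : W ∈ Matrix.unitaryGroup (Fin d) ℂ)
    (ha0 : ∀ i, 0 ≤ a i) (hb0 : ∀ i, 0 ≤ b i)
    (hAd : A = V * Matrix.diagonal (fun i => (a i : ℂ)) * Vᴴ)
    (hBd : B = W * Matrix.diagonal (fun i => (b i : ℂ)) * Wᴴ) {p : ℝ} (hp : 0 < p) :
    ∃ m : ℝ, 0 ≤ m ∧ eigsDesc (Zmat A B p) ⟨0, hd⟩ = m ^ (1 / p) ∧
      m ≤ ∑ i, ∑ j, a i ^ p * b j ^ p * ‖(Vᴴ * W) i j‖ ^ 2 ∧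
      ∑ i, ∑ j, a i ^ p * b j ^ p * ‖(Vᴴ * W) i j‖ ^ 2 ≤ d * m := by
  have hV' : Vᴴ * V = 1 := Matrix.mem_unitaryGroup_iff'.1 hV
  set P := psdPow A (p / 2) with hP
  set R := psdPow B p with hR
  have hPd : P = _ := psdPow_diag hV hAd (p / 2)
  have hRd : R = _ := psdPow_diag hW hBd p
  have hPH : Pᴴ = P := by rw [hPd]; exact diag_herm V _
  have hPP : P * P = V * Matrix.diagonal (fun i => ((a i ^ p : ℝ) : ℂ)) * Vᴴ := by
    rw [hPd]
    calc _ = V * Matrix.diagonal (fun i => ((a i ^ (p / 2) : ℝ) : ℂ)) * (Vᴴ * V) *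
          Matrix.diagonal (fun i => ((a i ^ (p / 2) : ℝ) : ℂ)) * Vᴴ := by
          simp only [Matrix.mul_assoc]
      _ = _ := by
        rw [hV', Matrix.mul_one, Matrix.mul_assoc V, Matrix.diagonal_mul_diagonal]
        congr 3
        ext i
        rw [← Complex.ofReal_mul, ← Real.rpow_add_of_nonneg (ha0 i) (by positivity) (by positivity),
          add_halves]
  have hRpsd : R.PosSemidef := by
    rw [hRd]
    apply Matrix.PosSemidef.mul_mul_conjTranspose_same
    apply Matrix.PosSemidef.diagonal
    intro i
    simp only [Pi.zero_apply]
    exact_mod_cast Real.rpow_nonneg (hb0 i) p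
  have hM : (P * R * P).PosSemidef := by
    have := hRpsd.mul_mul_conjTranspose_same P
    rwa [hPH] at this
  have hH := hM.isHermitian
  have hn := hM.eigenvalues_nonneg
  have htr : ∑ i, hH.eigenvalues i = ∑ i, ∑ j, a i ^ p * b j ^ p * ‖(Vᴴ * W) i j‖ ^ 2 := by
    have h0 : (P * R * P).trace =
        ((∑ i, ∑ j, a i ^ p * b j ^ p * ‖(Vᴴ * W) i j‖ ^ 2 : ℝ) : ℂ) := by
      rw [Matrix.trace_mul_comm, ← Matrix.mul_assoc, hPP, hRd,
        trace_form (fun i => a i ^ p) (fun i => b i ^ p)]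
    have h1 := h0.symm.trans hH.trace_eq_sum_eigenvalues
    have h2 := congrArg Complex.re h1
    rw [Complex.ofReal_re] at h2
    rw [h2]
    simp
  have hZ : Zmat A B p = _ := psdPow_diag hH.eigenvectorUnitary.2 (spec_form hH) (1 / p)
  obtain ⟨⟨i, hi⟩, hmax⟩ := eigsDesc_top hd hH.eigenvectorUnitary.2 hZ
  refine ⟨hH.eigenvalues i, hn i, hi, ?_, ?_⟩
  · rw [← htr]
    exact Finset.single_le_sum (fun k _ => hn k) (Finset.mem_univ i)
  · rw [← htr]
    have : ∀ k ∈ Finset.univ, hH.eigenvalues k ≤ hH.eigenvalues i := by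
      intro k _
      have := hmax k
      rw [hi] at this
      exact (Real.rpow_le_rpow_iff (hn k) (hn i) (by positivity)).1 this
    simpa using Finset.sum_le_card_nsmul _ _ _ this

theorem entry_le_sum {d : ℕ} (f : Fin d → Fin d → ℝ) (hf : ∀ i j, 0 ≤ f i j) (i j : Fin d) :
    f i j ≤ ∑ i, ∑ j, f i j :=
  (Finset.single_le_sum (f := fun j => f i j) (fun j _ => hf i j) (Finset.mem_univ j)).trans
    (Finset.single_le_sum (f := fun i => ∑ j, f i j)
      (fun i _ => Finset.sum_nonneg fun j _ => hf i j) (Finset.mem_univ i))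

theorem tendsto_const_root {c : ℝ} (hc : 0 < c) (L : ℝ) :
    Tendsto (fun p : ℝ => c ^ (1 / p) * L) atTop (𝓝 L) := by
  have h : Tendsto (fun p : ℝ => c ^ (1 / p)) atTop (𝓝 (c ^ (0 : ℝ))) := by
    have h0 : Tendsto (fun p : ℝ => 1 / p) atTop (𝓝 0) := by
      simp only [one_div]
      exact tendsto_inv_atTop_zero
    exact Tendsto.rpow tendsto_const_nhds h0 (Or.inl hc.ne')
  simpa using h.mul_const L

/-- The limit `λ_1` of the largest eigenvalue of `Z_p = (A^{p/2} B^p A^{p/2})^{1/p}`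
as `p → ∞` exists and is the maximum of `{a_i b_j : (V*W)_{ij} ≠ 0}`. -/
theorem anti_lie_trotter_top_eigenvalue_limit
    {d : ℕ} (hd : 0 < d) (A B V W : Matrix (Fin d) (Fin d) ℂ) (a b : Fin d → ℝ)
    (hA : A.PosSemidef) (hB : B.PosSemidef)
    (hV : V ∈ Matrix.unitaryGroup (Fin d) ℂ)
    (hW : W ∈ Matrix.unitaryGroup (Fin d) ℂ)
    (ha : Antitone a) (hb : Antitone b)
    (ha0 : ∀ i, 0 ≤ a i) (hb0 : ∀ i, 0 ≤ b i)
    (hAd : A = V * Matrix.diagonal (fun i => (a i : ℂ)) * Vᴴ)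
    (hBd : B = W * Matrix.diagonal (fun i => (b i : ℂ)) * Wᴴ) :
    ∃ lam1 : ℝ,
      Tendsto (fun p : ℝ => eigsDesc (Zmat A B p) ⟨0, hd⟩) atTop (𝓝 lam1) ∧
      IsGreatest {x : ℝ | ∃ i j : Fin d, (Vᴴ * W) i j ≠ 0 ∧ x = a i * b j} lam1 := by
  have hV' : Vᴴ * V = 1 := Matrix.mem_unitaryGroup_iff'.1 hV
  have hW' : W * Wᴴ = 1 := Matrix.mem_unitaryGroup_iff.1 hW
  have hX : (Vᴴ * W) * (Vᴴ * W)ᴴ = 1 := by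
    rw [Matrix.conjTranspose_mul, Matrix.conjTranspose_conjTranspose, Matrix.mul_assoc,
      ← Matrix.mul_assoc W, hW', Matrix.one_mul, hV']
  set X := Vᴴ * W with hXdef
  obtain ⟨j₁, hj₁⟩ := unitary_row hX ⟨0, hd⟩
  set S : Finset (Fin d × Fin d) := Finset.univ.filter (fun q => X q.1 q.2 ≠ 0) with hS
  obtain ⟨⟨i₀, j₀⟩, hq, hmax⟩ := S.exists_max_image (fun q => a q.1 * b q.2)
    ⟨(⟨0, hd⟩, j₁), by simp [hS, hj₁]⟩
  have hq0 : X i₀ j₀ ≠ 0 := by simpa [hS] using hq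
  have hmax' : ∀ i j, X i j ≠ 0 → a i * b j ≤ a i₀ * b j₀ := fun i j h =>
    hmax (i, j) (by simp [hS, h])
  set L := a i₀ * b j₀ with hL
  have hL0 : 0 ≤ L := mul_nonneg (ha0 _) (hb0 _)
  refine ⟨L, ?_, ⟨i₀, j₀, hq0, rfl⟩, ?_⟩
  swap
  · rintro x ⟨i, j, h, rfl⟩
    exact hmax' i j h
  have hdR : (0 : ℝ) < d := by exact_mod_cast hd
  set c : ℝ := ‖X i₀ j₀‖ ^ 2 with hc
  have hc0 : 0 < c := by positivity
  set C : ℝ := ∑ i, ∑ j, ‖X i j‖ ^ 2 with hC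
  have hcC : c ≤ C := entry_le_sum (fun i j => ‖X i j‖ ^ 2) (fun i j => sq_nonneg _) i₀ j₀
  have hC0 : 0 < C := hc0.trans_le hcC
  have hroot : ∀ {p : ℝ}, 0 < p → ∀ {k : ℝ}, 0 < k → (k * L ^ p) ^ (1 / p) = k ^ (1 / p) * L := by
    intro p hp k hk
    rw [Real.mul_rpow hk.le (by positivity), ← Real.rpow_mul hL0, mul_one_div_cancel hp.ne',
      Real.rpow_one]
  refine tendsto_of_tendsto_of_tendsto_of_le_of_le'
    (tendsto_const_root (div_pos hc0 hdR) L) (tendsto_const_root hC0 L) ?_ ?_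
  all_goals
    filter_upwards [eventually_gt_atTop (0 : ℝ)] with p hp
    obtain ⟨m, hm0, hm, hle, hge⟩ := top_bounds hd hV hW ha0 hb0 hAd hBd hp
    rw [← hXdef] at hle hge
    have hnn : ∀ i j, 0 ≤ a i ^ p * b j ^ p * ‖X i j‖ ^ 2 := fun i j =>
      mul_nonneg (mul_nonneg (Real.rpow_nonneg (ha0 i) _) (Real.rpow_nonneg (hb0 j) _))
        (by positivity)
  · rw [hm, ← hroot hp (div_pos hc0 hdR)]
    apply Real.rpow_le_rpow (by positivity) _ (by positivity)
    have h1 : L ^ p * c ≤ ∑ i, ∑ j, a i ^ p * b j ^ p * ‖X i j‖ ^ 2 := by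
      rw [hL, Real.mul_rpow (ha0 _) (hb0 _)]
      exact entry_le_sum (fun i j => a i ^ p * b j ^ p * ‖X i j‖ ^ 2) hnn i₀ j₀
    rw [div_mul_eq_mul_div, div_le_iff₀ hdR]
    linarith
  · rw [hm, ← hroot hp hC0]
    apply Real.rpow_le_rpow hm0 _ (by positivity)
    refine hle.trans ?_
    rw [hC, Finset.sum_mul]
    refine Finset.sum_le_sum fun i _ => ?_
    rw [Finset.sum_mul]
    refine Finset.sum_le_sum fun j _ => ?_
    by_cases h : X i j = 0
    · simp [h]
    · rw [mul_comm, ← Real.mul_rpow (ha0 _) (hb0 _)]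
      exact mul_le_mul_of_nonneg_left
        (Real.rpow_le_rpow (mul_nonneg (ha0 _) (hb0 _)) (hmax' i j h) hp.le) (by positivity)
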